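/- Let h_1, …, h_l ∈ K[z_n] with h_1 | h_2 | ⋯ | h_l, let f ∈ K[z_2, …, z_n], let V ∈ K[z_2, …, z_n]^{l×l} be a unimodular matrix, and set B = diag(h_1, …, h_l) · V · diag(1, …, 1, z_1 − f). Assume that for every k = 1, …, l−1 the product h_1⋯h_k is a greatest common divisor of the k×k minors of B and J_k(B) = R. Let B_1 ∈ R^{l×(l−1)} be the submatrix consisting of the first l−1 columns of B. Then for every i = 1, …, l−1, the product h_1⋯h_i is a greatest common divisor of the i×i minors of B_1 and J_i(B_1) = R. -/

import Mathlib

open MvPolynomial Matrix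

section Defs

variable {A : Type*} [CommRing A]

/-- The set of all `k × k` minors of a matrix. -/
def minorsSet {l m : ℕ} (F : Matrix (Fin l) (Fin m) A) (k : ℕ) : Set A :=
  { p | ∃ (r : Fin k ↪ Fin l) (c : Fin k ↪ Fin m), p = (F.submatrix ⇑r ⇑c).det }

/-- `d` is a greatest common divisor of the `k × k` minors of `F`. -/
def IsGcdMinors {l m : ℕ} (F : Matrix (Fin l) (Fin m) A) (k : ℕ) (d : A) : Prop :=
  (∀ p ∈ minorsSet F k, d ∣ p) ∧ ∀ e : A, (∀ p ∈ minorsSet F k, e ∣ p) → e ∣ d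

/-- The ideal generated by the `k × k` reduced minors of `F`, relative to a gcd `d`
of the `k × k` minors (the reduced minors are the `v` with `d * v` a minor). -/
def reducedIdeal {l m : ℕ} (F : Matrix (Fin l) (Fin m) A) (k : ℕ) (d : A) : Ideal A :=
  Ideal.span { v : A | d * v ∈ minorsSet F k }

/-- `J_k(F) = R`: the `k × k` reduced minors of `F` generate the unit ideal. -/
def JkUnit {l m : ℕ} (F : Matrix (Fin l) (Fin m) A) (k : ℕ) : Prop :=
  ∃ d : A, IsGcdMinors F k d ∧ reducedIdeal F k d = ⊤

/-- `F` has rank `r`: some `r × r` minor is nonzero and all `(r+1) × (r+1)` minors vanish. -/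
def HasRank {l m : ℕ} (F : Matrix (Fin l) (Fin m) A) (r : ℕ) : Prop :=
  (∃ p ∈ minorsSet F r, p ≠ 0) ∧ ∀ p ∈ minorsSet F (r + 1), p = 0

/-- Equivalence of matrices: `F₁ = U * F₂ * V` for unimodular `U`, `V`. -/
def MatEquiv {l m : ℕ} (F₁ F₂ : Matrix (Fin l) (Fin m) A) : Prop :=
  ∃ (U : Matrix (Fin l) (Fin l) A) (V : Matrix (Fin m) (Fin m) A),
    IsUnit U.det ∧ IsUnit V.det ∧ F₁ = U * F₂ * V

/-- The rectangular diagonal matrix with diagonal entries `Φ`. -/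
def smithDiag {l m : ℕ} (Φ : Fin l → A) : Matrix (Fin l) (Fin m) A :=
  Matrix.of fun i j => if (i : ℕ) = (j : ℕ) then Φ i else 0

/-- `F` (of rank `r`) is equivalent to its Smith form: there are diagonal entries `Φ` such that
for each `i ≤ r` the product `Φ_1 ⋯ Φ_i` is a gcd of the `i × i` minors of `F`
(i.e. `Φ_i = d_i(F)/d_{i-1}(F)`), `Φ_i = 0` for `i > r`, and `F` is equivalent to
the diagonal matrix with entries `Φ`. -/
def SmithEquivAt {l m : ℕ} (F : Matrix (Fin l) (Fin m) A) (r : ℕ) : Prop :=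
  ∃ Φ : Fin l → A,
    (∀ i : Fin l, (i : ℕ) < r →
      IsGcdMinors F ((i : ℕ) + 1) (∏ j ∈ Finset.Iic i, Φ j)) ∧
    (∀ i : Fin l, r ≤ (i : ℕ) → Φ i = 0) ∧
    MatEquiv F (smithDiag Φ)

/-- `F` is equivalent to its Smith form. -/
def EquivToSmith {l m : ℕ} (F : Matrix (Fin l) (Fin m) A) : Prop :=
  ∃ r : ℕ, HasRank F r ∧ SmithEquivAt F r

end Defs

/-!
Let `I_k(F)` be the ideal generated by the `k × k` minors of `F`. Over a domain, if `F`
has at least `k` rows and columns, then `d` is a gcd of its `k × k` minors with reduced minors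
generating the unit ideal exactly when `I_k(F) = (d)`, and such an equality is
preserved by ring homomorphisms. The substitution `z₁ ↦ f` fixes `d` and the first `l - 1` columns
of `B`, and it kills the last column. Hence it carries `I_k(B) = (d)` to
`I_k(B₁) = (d)`.
-/

section DeterminantalIdeal

variable {A A' : Type*} [CommRing A] [CommRing A'] {l m k : ℕ}

/-- The `k`-th determinantal ideal of `F`, generated by its `k × k` minors. -/
def determinantalIdeal (F : Matrix (Fin l) (Fin m) A) (k : ℕ) : Ideal A :=
  Ideal.span (minorsSet F k)

theorem minorsSet_nonempty (F : Matrix (Fin l) (Fin m) A) (hkl : k ≤ l) (hkm : k ≤ m) :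
    (minorsSet F k).Nonempty :=
  ⟨_, Fin.castLEEmb hkl, Fin.castLEEmb hkm, rfl⟩

theorem minorsSet_map (φ : A →+* A') (F : Matrix (Fin l) (Fin m) A) (k : ℕ) :
    minorsSet (F.map φ) k = φ '' minorsSet F k := by
  ext p
  constructor
  · rintro ⟨r, c, rfl⟩
    exact ⟨_, ⟨r, c, rfl⟩, φ.map_det _⟩
  · rintro ⟨_, ⟨r, c, rfl⟩, rfl⟩
    exact ⟨r, c, φ.map_det _⟩

theorem map_determinantalIdeal (φ : A →+* A') (F : Matrix (Fin l) (Fin m) A) (k : ℕ) :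
    (determinantalIdeal F k).map φ = determinantalIdeal (F.map φ) k := by
  rw [determinantalIdeal, determinantalIdeal, Ideal.map_span, minorsSet_map]

theorem span_singleton_mul_reducedIdeal {F : Matrix (Fin l) (Fin m) A} {d : A}
    (hd : ∀ p ∈ minorsSet F k, d ∣ p) :
    Ideal.span {d} * reducedIdeal F k d = determinantalIdeal F k := by
  rw [reducedIdeal, determinantalIdeal, Ideal.span_mul_span', Set.singleton_mul]
  congr 1
  refine Set.Subset.antisymm (Set.image_subset_iff.mpr fun v hv => hv) fun p hp => ?_
  obtain ⟨v, rfl⟩ := hd p hp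
  exact ⟨v, hp, rfl⟩

theorem isGcdMinors_of_determinantalIdeal_eq_span_singleton {F : Matrix (Fin l) (Fin m) A} {d : A}
    (h : determinantalIdeal F k = Ideal.span {d}) : IsGcdMinors F k d := by
  refine ⟨fun p hp => ?_, fun e he => ?_⟩
  · exact Ideal.mem_span_singleton.mp (h ▸ Ideal.subset_span hp)
  · rw [← Ideal.span_singleton_le_span_singleton, ← h, determinantalIdeal, Ideal.span_le]
    exact fun p hp => Ideal.mem_span_singleton.mpr (he p hp)

theorem reducedIdeal_zero_eq_top {F : Matrix (Fin l) (Fin m) A} (h : 0 ∈ minorsSet F k) :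
    reducedIdeal F k 0 = ⊤ := by
  refine (Ideal.eq_top_iff_one _).mpr (Ideal.subset_span ?_)
  rwa [Set.mem_ofPred_eq, zero_mul]

theorem isGcdMinors_and_reducedIdeal_eq_top_iff [IsDomain A] {F : Matrix (Fin l) (Fin m) A} {d : A}
    (hkl : k ≤ l) (hkm : k ≤ m) :
    IsGcdMinors F k d ∧ reducedIdeal F k d = ⊤ ↔ determinantalIdeal F k = Ideal.span {d} := by
  refine ⟨fun ⟨hgcd, htop⟩ => ?_, fun h => ?_⟩
  · rw [← span_singleton_mul_reducedIdeal hgcd.1, htop, Ideal.mul_top]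
  have hgcd := isGcdMinors_of_determinantalIdeal_eq_span_singleton h
  refine ⟨hgcd, ?_⟩
  rcases eq_or_ne d 0 with rfl | hd
  · obtain ⟨p, hp⟩ := minorsSet_nonempty F hkl hkm
    exact reducedIdeal_zero_eq_top (zero_dvd_iff.mp (hgcd.1 p hp) ▸ hp)
  · rw [← Ideal.span_singleton_mul_right_inj hd, span_singleton_mul_reducedIdeal hgcd.1, h,
      Ideal.mul_top]

variable {m' : ℕ}

theorem minorsSet_submatrix_subset (F : Matrix (Fin l) (Fin m) A) (c : Fin m' ↪ Fin m) (k : ℕ) :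
    minorsSet (F.submatrix id c) k ⊆ minorsSet F k := by
  rintro _ ⟨r, c', rfl⟩
  exact ⟨r, c'.trans c, rfl⟩

theorem eq_zero_or_mem_minorsSet_submatrix {F : Matrix (Fin l) (Fin m) A} {c : Fin m' ↪ Fin m}
    (hzero : ∀ j ∉ Set.range c, ∀ i, F i j = 0) {p : A} (hp : p ∈ minorsSet F k) :
    p = 0 ∨ p ∈ minorsSet (F.submatrix id c) k := by
  obtain ⟨r, q, rfl⟩ := hp
  by_cases hq : ∀ j, q j ∈ Set.range c
  · right
    choose q' hq' using hq
    have hq'_inj : Function.Injective q' := fun a b hab =>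
      q.injective (by rw [← hq' a, ← hq' b, hab])
    refine ⟨r, ⟨q', hq'_inj⟩, congrArg Matrix.det ?_⟩
    ext a b
    exact congrArg (F (r a)) (hq' b).symm
  · left
    push Not at hq
    obtain ⟨j, hj⟩ := hq
    exact Matrix.det_eq_zero_of_column_eq_zero j fun a => hzero _ hj _

theorem determinantalIdeal_submatrix_of_eq_zero {F : Matrix (Fin l) (Fin m) A} {c : Fin m' ↪ Fin m}
    (hzero : ∀ j ∉ Set.range c, ∀ i, F i j = 0) (k : ℕ) :
    determinantalIdeal (F.submatrix id c) k = determinantalIdeal F k := by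
  refine le_antisymm (Ideal.span_mono (minorsSet_submatrix_subset F c k)) ?_
  refine Ideal.span_le.mpr fun p hp => ?_
  rcases eq_zero_or_mem_minorsSet_submatrix hzero hp with rfl | hp'
  · exact Ideal.zero_mem _
  · exact Ideal.subset_span hp'

theorem determinantalIdeal_submatrix_eq_map (φ : A →+* A) {F : Matrix (Fin l) (Fin m) A}
    {c : Fin m' ↪ Fin m} (hfix : ∀ i j, φ (F i (c j)) = F i (c j))
    (hzero : ∀ j ∉ Set.range c, ∀ i, φ (F i j) = 0) (k : ℕ) :
    determinantalIdeal (F.submatrix id c) k = (determinantalIdeal F k).map φ := by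
  have hsub : F.submatrix id c = (F.map φ).submatrix id c := by
    ext i j
    exact (hfix i j).symm
  rw [hsub, map_determinantalIdeal]
  exact determinantalIdeal_submatrix_of_eq_zero hzero k

end DeterminantalIdeal

theorem aeval_update_X_of_mem_supported {R σ : Type*} [CommRing R] [DecidableEq σ] {S : Set σ}
    {s : σ} (hs : s ∉ S) (f : MvPolynomial σ R) {p : MvPolynomial σ R} (hp : p ∈ supported R S) :
    aeval (Function.update X s f) p = p := by
  have hle : supported R S ≤
      AlgHom.equalizer (aeval (Function.update X s f)) (AlgHom.id R (MvPolynomial σ R)) := by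
    refine Algebra.adjoin_le ?_
    rintro _ ⟨t, ht, rfl⟩
    have hts : t ≠ s := ne_of_mem_of_not_mem ht hs
    simp [hts]
  exact hle hp

theorem statement10_general {R σ : Type*} [CommRing R] [IsDomain R] {S : Set σ} {s : σ}
    (hs : s ∉ S) {f : MvPolynomial σ R} (hf : f ∈ supported R S) {l m k : ℕ}
    {M B : Matrix (Fin l) (Fin m) (MvPolynomial σ R)} (hM : ∀ i j, M i j ∈ supported R S)
    (hB : B = M * diagonal fun j : Fin m => if (j : ℕ) = m - 1 then X s - f else 1)
    {d : MvPolynomial σ R} (hd : d ∈ supported R S) (hkl : k ≤ l) (hkm : k ≤ m - 1)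
    (hgcd : IsGcdMinors B k d ∧ reducedIdeal B k d = ⊤) :
    IsGcdMinors (B.submatrix id (Fin.castLE (Nat.sub_le m 1))) k d ∧
      reducedIdeal (B.submatrix id (Fin.castLE (Nat.sub_le m 1))) k d = ⊤ := by
  classical
  let φ := aeval (R := R) (Function.update X s f)
  have hφ {p : MvPolynomial σ R} (hp : p ∈ supported R S) : φ p = p :=
    aeval_update_X_of_mem_supported hs f hp
  have hφB (i : Fin l) (j : Fin m) : φ (B i j) = if (j : ℕ) = m - 1 then 0 else B i j := by
    have hφX : φ (X s - f) = 0 := by rw [map_sub, hφ hf]; simp [φ]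
    rw [hB, mul_diagonal]
    split_ifs <;> simp [hφ (hM i j), hφX]
  have hfix (i : Fin l) (j : Fin (m - 1)) :
      φ (B i (Fin.castLEEmb (Nat.sub_le m 1) j)) = B i (Fin.castLEEmb (Nat.sub_le m 1) j) := by
    simp [hφB, j.isLt.ne]
  have hzero (j : Fin m) (hj : j ∉ Set.range (Fin.castLEEmb (Nat.sub_le m 1))) (i : Fin l) :
      φ (B i j) = 0 := by
    have hj_last : (j : ℕ) = m - 1 := by
      simp only [Fin.coe_castLEEmb, Fin.range_castLE, Set.mem_ofPred_eq] at hj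
      omega
    rw [hφB, if_pos hj_last]
  rw [isGcdMinors_and_reducedIdeal_eq_top_iff hkl (by omega)] at hgcd
  refine (isGcdMinors_and_reducedIdeal_eq_top_iff hkl hkm).mpr ?_
  calc determinantalIdeal (B.submatrix id (Fin.castLEEmb (Nat.sub_le m 1))) k
      = (determinantalIdeal B k).map (φ : MvPolynomial σ R →+* MvPolynomial σ R) :=
        determinantalIdeal_submatrix_eq_map _ hfix hzero k
    _ = Ideal.span {φ d} := by rw [hgcd, Ideal.map_span, Set.image_singleton]; rfl
    _ = Ideal.span {d} := by rw [hφ hd]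

/-- `B₁` is the submatrix of the first `l - 1` columns of `B`. -/
theorem statement10 {K : Type*} [Field K] (n : ℕ) (hn : 2 ≤ n) (l : ℕ) (hl : 0 < l)
    (h : Fin l → MvPolynomial (Fin n) K)
    (hsup : ∀ i : Fin l, h i ∈ MvPolynomial.supported K {(⟨n - 1, by omega⟩ : Fin n)})
    (hchain : ∀ i j : Fin l, i ≤ j → h i ∣ h j)
    (f : MvPolynomial (Fin n) K)
    (hf : f ∈ MvPolynomial.supported K {t : Fin n | (t : ℕ) ≠ 0})
    (V : Matrix (Fin l) (Fin l) (MvPolynomial (Fin n) K))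
    (hVsup : ∀ i j : Fin l, V i j ∈ MvPolynomial.supported K {t : Fin n | (t : ℕ) ≠ 0})
    (hVuni : IsUnit V.det)
    (B : Matrix (Fin l) (Fin l) (MvPolynomial (Fin n) K))
    (hB : B = Matrix.diagonal h * V *
      Matrix.diagonal (fun i : Fin l =>
        if (i : ℕ) = l - 1 then MvPolynomial.X (⟨0, by omega⟩ : Fin n) - f else 1))
    (hgcd : ∀ k : ℕ, 1 ≤ k → k ≤ l - 1 →
      IsGcdMinors B k (∏ j ∈ Finset.univ.filter (fun j : Fin l => (j : ℕ) < k), h j) ∧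
      reducedIdeal B k (∏ j ∈ Finset.univ.filter (fun j : Fin l => (j : ℕ) < k), h j) = ⊤)
    (B₁ : Matrix (Fin l) (Fin (l - 1)) (MvPolynomial (Fin n) K))
    (hB₁ : B₁ = B.submatrix id (Fin.castLE (by omega : l - 1 ≤ l))) :
    ∀ i : ℕ, 1 ≤ i → i ≤ l - 1 →
      IsGcdMinors B₁ i (∏ j ∈ Finset.univ.filter (fun j : Fin l => (j : ℕ) < i), h j) ∧
      reducedIdeal B₁ i (∏ j ∈ Finset.univ.filter (fun j : Fin l => (j : ℕ) < i), h j) = ⊤ := by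
  have hh (i : Fin l) : h i ∈ supported K {t : Fin n | (t : ℕ) ≠ 0} :=
    supported_mono (Set.singleton_subset_iff.mpr (show n - 1 ≠ 0 by omega)) (hsup i)
  subst hB₁
  exact fun i hi hil => statement10_general (by simp) hf
    (fun a b => by simpa using mul_mem (hh a) (hVsup a b)) hB (prod_mem fun j _ => hh j)
    (by omega) hil (hgcd i hi hil)
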